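/- There exists a constant C₀ > 0, independent of N and M, with the following property: for every integer N ≥ 1 (with h = 1/N), every M > 0, and all periodic grid functions φ̂, φ* satisfying 0 < φ̂(i,j,k) ≤ M and 0 < φ*(i,j,k) ≤ M for all (i,j,k) and such that φ* − φ̂ has zero mean, every zero-mean periodic grid function ψ with −Δ_h ψ = φ̂ − φ* satisfies ‖ψ‖_∞ ≤ C₀·M. -/

import Mathlib

/-!
The maximum principle is applied after doubling variables. For a step `e` of order `N`, consider
`u (p + n • e) - u p - c * n * (N - n)` on `0 ≤ n ≤ N`. At a maximum with `0 < n < N`, moving both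
endpoints along the other steps, and one endpoint at a time along `±e`, gives
`Δu (p + n • e) - Δu p ≤ -4 * c`, which is impossible when `|Δu| < 2 * c`. The maximum is thus
attained at `n = 0` or `n = N`, where the expression vanishes, so `u` oscillates by at most
`c * N ^ 2 / 4` along each step. On the grid `Δ_h = N ^ 2 * Δ`, and the factors of `N` cancel.
-/

open scoped BigOperators

/-- The periodic grid of indices: `(ZMod N)^3`. -/
abbrev GridIdx (N : ℕ) := ZMod N × ZMod N × ZMod N

namespace PNP

/-- Shift the first index by `a`. -/
def xsh {N : ℕ} (p : GridIdx N) (a : ZMod N) : GridIdx N := (p.1 + a, p.2.1, p.2.2)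
/-- Shift the second index by `a`. -/
def ysh {N : ℕ} (p : GridIdx N) (a : ZMod N) : GridIdx N := (p.1, p.2.1 + a, p.2.2)
/-- Shift the third index by `a`. -/
def zsh {N : ℕ} (p : GridIdx N) (a : ZMod N) : GridIdx N := (p.1, p.2.1, p.2.2 + a)

/-- Forward difference in `x`: `(D_x f)(p) = (f(p + e_x) - f(p)) / h` with `h = 1/N`. -/
noncomputable def Dx (N : ℕ) (f : GridIdx N → ℝ) : GridIdx N → ℝ :=
  fun p => (f (xsh p 1) - f p) * N
/-- Forward difference in `y`. -/
noncomputable def Dy (N : ℕ) (f : GridIdx N → ℝ) : GridIdx N → ℝ :=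
  fun p => (f (ysh p 1) - f p) * N
/-- Forward difference in `z`. -/
noncomputable def Dz (N : ℕ) (f : GridIdx N → ℝ) : GridIdx N → ℝ :=
  fun p => (f (zsh p 1) - f p) * N

/-- Backward difference in `x`: `(d_x f)(p) = (f(p) - f(p - e_x)) / h`. -/
noncomputable def dxm (N : ℕ) (f : GridIdx N → ℝ) : GridIdx N → ℝ :=
  fun p => (f p - f (xsh p (-1))) * N
/-- Backward difference in `y`. -/
noncomputable def dym (N : ℕ) (f : GridIdx N → ℝ) : GridIdx N → ℝ :=
  fun p => (f p - f (ysh p (-1))) * N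
/-- Backward difference in `z`. -/
noncomputable def dzm (N : ℕ) (f : GridIdx N → ℝ) : GridIdx N → ℝ :=
  fun p => (f p - f (zsh p (-1))) * N

/-- Forward average in `x`: `(A_x f)(p) = (f(p + e_x) + f(p)) / 2`. -/
noncomputable def Ax (N : ℕ) (f : GridIdx N → ℝ) : GridIdx N → ℝ :=
  fun p => (f (xsh p 1) + f p) / 2
/-- Forward average in `y`. -/
noncomputable def Ay (N : ℕ) (f : GridIdx N → ℝ) : GridIdx N → ℝ :=
  fun p => (f (ysh p 1) + f p) / 2
/-- Forward average in `z`. -/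
noncomputable def Az (N : ℕ) (f : GridIdx N → ℝ) : GridIdx N → ℝ :=
  fun p => (f (zsh p 1) + f p) / 2

/-- The discrete Laplacian `Δ_h f = d_x(D_x f) + d_y(D_y f) + d_z(D_z f)`. -/
noncomputable def lap (N : ℕ) (f : GridIdx N → ℝ) : GridIdx N → ℝ :=
  fun p => dxm N (Dx N f) p + dym N (Dy N f) p + dzm N (Dz N f) p

/-- The discrete inner product `⟨f, g⟩ = h³ ∑ f·g` with `h = 1/N`. -/
noncomputable def ip (N : ℕ) [NeZero N] (f g : GridIdx N → ℝ) : ℝ :=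
  ((1 : ℝ) / N) ^ 3 * ∑ p : GridIdx N, f p * g p

/-- The discrete `L²` norm `‖f‖₂ = ⟨f, f⟩^{1/2}`. -/
noncomputable def l2 (N : ℕ) [NeZero N] (f : GridIdx N → ℝ) : ℝ :=
  Real.sqrt (ip N f f)

/-- The discrete maximum norm `‖f‖_∞ = max |f|`. -/
noncomputable def linf (N : ℕ) [NeZero N] (f : GridIdx N → ℝ) : ℝ :=
  ⨆ p : GridIdx N, |f p|

/-- A grid function has zero mean if its values sum to zero. -/
def zeroMean (N : ℕ) [NeZero N] (f : GridIdx N → ℝ) : Prop :=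
  ∑ p : GridIdx N, f p = 0

/-- With `F(x) = x·ln x`, the difference quotient `G¹_a(x) = (F(x) - F(a))/(x - a)`
for `x ≠ a`, with value `F'(a) = ln a + 1` at `x = a`. -/
noncomputable def G1 (a x : ℝ) : ℝ :=
  if x = a then Real.log a + 1
  else (x * Real.log x - a * Real.log a) / (x - a)

end PNP

open PNP

section DiscreteLaplacian

variable {G ι : Type*} [AddCommGroup G]

/-- The centred second difference of `u` in the direction `e`, without division by the square of
the mesh size. -/
def secondDiff (e : G) (u : G → ℝ) (p : G) : ℝ :=
  u (p + e) + u (p - e) - 2 * u p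

/-- The graph Laplacian of the Cayley graph of `G` with steps `±e i`, with the sign convention that
makes it nonpositive at a maximum and without mesh-size scaling. -/
def discreteLaplacian [Fintype ι] (e : ι → G) (u : G → ℝ) (p : G) : ℝ :=
  ∑ i, secondDiff (e i) u p

/-- The increment of `u` from `p` to `p + n • e`, minus the parabola with second difference `-2 * c`
vanishing at `n = 0` and `n = N`. The pair `(p, n)` encodes the two endpoints of the increment. -/
def penalizedIncrement (e : G) (N : ℕ) (c : ℝ) (u : G → ℝ) (p : G) (n : ℕ) : ℝ :=
  u (p + n • e) - u p - c * (n * (N - n))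

lemma secondDiff_add_nsmul_le_of_isMax {e d q : G} {N n : ℕ} {c : ℝ} {u : G → ℝ}
    (hmax : ∀ p, penalizedIncrement e N c u p n ≤ penalizedIncrement e N c u q n) :
    secondDiff d u (q + n • e) ≤ secondDiff d u q := by
  have hfwd := hmax (q + d)
  have hbwd := hmax (q - d)
  simp only [penalizedIncrement, add_right_comm q d, sub_add_eq_add_sub] at hfwd hbwd
  simp only [secondDiff]
  linarith

lemma secondDiff_add_succ_nsmul_le_of_isMax {e q : G} {N m : ℕ} {c : ℝ} {u : G → ℝ}
    (hmax : ∀ p, ∀ n ≤ m + 2,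
      penalizedIncrement e N c u p n ≤ penalizedIncrement e N c u q (m + 1)) :
    secondDiff e u (q + (m + 1) • e) ≤ secondDiff e u q - 4 * c := by
  have hright_fwd := hmax q (m + 2) le_rfl
  have hright_bwd := hmax q m (by lia)
  have hleft_fwd := hmax (q + e) m (by lia)
  have hleft_bwd := hmax (q - e) (m + 2) le_rfl
  have hend_fwd : q + (m + 2) • e = q + (m + 1) • e + e := by module
  have hend_bwd : q + m • e = q + (m + 1) • e - e := by module
  have hend_left_fwd : q + e + m • e = q + (m + 1) • e := by module
  have hend_left_bwd : q - e + (m + 2) • e = q + (m + 1) • e := by module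
  simp only [penalizedIncrement, hend_fwd, hend_bwd, hend_left_fwd, hend_left_bwd, Nat.cast_add,
    Nat.cast_one, Nat.cast_ofNat] at hright_fwd hright_bwd hleft_fwd hleft_bwd
  simp only [secondDiff]
  linarith

lemma discreteLaplacian_add_succ_nsmul_le_of_isMax [Fintype ι] {e : ι → G} {i : ι} {q : G}
    {N m : ℕ} {c : ℝ} {u : G → ℝ}
    (hmax : ∀ p, ∀ n ≤ m + 2,
      penalizedIncrement (e i) N c u p n ≤ penalizedIncrement (e i) N c u q (m + 1)) :
    discreteLaplacian e u (q + (m + 1) • e i) ≤ discreteLaplacian e u q - 4 * c := by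
  classical
  have hother : ∑ j ∈ Finset.univ.erase i, secondDiff (e j) u (q + (m + 1) • e i) ≤
      ∑ j ∈ Finset.univ.erase i, secondDiff (e j) u q :=
    Finset.sum_le_sum fun j _ ↦
      secondDiff_add_nsmul_le_of_isMax fun p ↦ hmax p (m + 1) (by lia)
  have hstep := secondDiff_add_succ_nsmul_le_of_isMax hmax
  simp only [discreteLaplacian, ← Finset.add_sum_erase _ _ (Finset.mem_univ i)]
  linarith

lemma penalizedIncrement_zero (e : G) (N : ℕ) (c : ℝ) (u : G → ℝ) (p : G) :
    penalizedIncrement e N c u p 0 = 0 := by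
  simp [penalizedIncrement]

lemma penalizedIncrement_self {e : G} {N : ℕ} (hN : N • e = 0) (c : ℝ) (u : G → ℝ) (p : G) :
    penalizedIncrement e N c u p N = 0 := by
  simp [penalizedIncrement, hN]

lemma penalizedIncrement_nonpos [Finite G] [Fintype ι] {e : ι → G} {i : ι} {N : ℕ}
    (hN : N • e i = 0) {c : ℝ} {u : G → ℝ} (hu : ∀ p, |discreteLaplacian e u p| < 2 * c)
    (p : G) {n : ℕ} (hn : n ≤ N) :
    penalizedIncrement (e i) N c u p n ≤ 0 := by
  obtain ⟨⟨q, k, hk⟩, hmax⟩ := Finite.exists_max fun x : G × Fin (N + 1) ↦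
    penalizedIncrement (e i) N c u x.1 x.2
  replace hmax : ∀ p, ∀ n ≤ N,
      penalizedIncrement (e i) N c u p n ≤ penalizedIncrement (e i) N c u q k :=
    fun p n hn ↦ hmax (p, ⟨n, Nat.lt_succ_of_le hn⟩)
  refine (hmax p n hn).trans ?_
  obtain _ | m := k
  · exact (penalizedIncrement_zero ..).le
  obtain rfl | hm : m + 1 = N ∨ m + 2 ≤ N := by lia
  · exact (penalizedIncrement_self hN c u q).le
  have hlap := discreteLaplacian_add_succ_nsmul_le_of_isMax fun p n hn ↦ hmax p n (hn.trans hm)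
  have hupper := (abs_lt.mp (hu q)).2
  have hlower := (abs_lt.mp (hu (q + (m + 1) • e i))).1
  linarith

lemma add_nsmul_sub_le_of_abs_discreteLaplacian_le [Finite G] [Fintype ι] {e : ι → G} {i : ι}
    {N : ℕ} (hN : N • e i = 0) {K : ℝ} {u : G → ℝ} (hu : ∀ p, |discreteLaplacian e u p| ≤ K)
    (p : G) {n : ℕ} (hn : n ≤ N) :
    u (p + n • e i) - u p ≤ K / 2 * (n * (N - n)) := by
  have hstrict : ∀ c > K / 2, u (p + n • e i) - u p ≤ c * (n * (N - n)) := fun c hc ↦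
    sub_nonpos.mp <|
      penalizedIncrement_nonpos hN (fun q ↦ (hu q).trans_lt ((div_lt_iff₀' two_pos).mp hc)) p hn
  have hlim : Filter.Tendsto (fun c : ℝ ↦ c * (n * (N - n))) (nhdsWithin (K / 2) (Set.Ioi (K / 2)))
      (nhds (K / 2 * (n * (N - n)))) :=
    (continuous_mul_const _).continuousWithinAt
  exact ge_of_tendsto hlim (eventually_nhdsWithin_of_forall hstrict)

lemma add_zsmul_sub_le_of_abs_discreteLaplacian_le [Finite G] [Fintype ι] {e : ι → G} {K : ℝ}
    {u : G → ℝ} (hu : ∀ p, |discreteLaplacian e u p| ≤ K) (i : ι) (p : G) (a : ℤ) :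
    u (p + a • e i) - u p ≤ K / 8 * (addOrderOf (e i) : ℝ) ^ 2 := by
  classical
  obtain ⟨n, hn, hna⟩ : ∃ n ∈ Finset.range (addOrderOf (e i)), n • e i = a • e i :=
    Finset.mem_image.mp <|
      mem_zmultiples_iff_mem_range_addOrderOf.mp (AddSubgroup.zsmul_mem_zmultiples (e i) a)
  have hK : 0 ≤ K := (abs_nonneg _).trans (hu p)
  have hparabola : (n : ℝ) * (addOrderOf (e i) - n) ≤ (addOrderOf (e i) : ℝ) ^ 2 / 4 := by
    linarith [sq_nonneg ((addOrderOf (e i) : ℝ) - 2 * n)]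
  calc u (p + a • e i) - u p
      ≤ K / 2 * (n * (addOrderOf (e i) - n)) := by
        rw [← hna]
        exact add_nsmul_sub_le_of_abs_discreteLaplacian_le (addOrderOf_nsmul_eq_zero _) hu p
          (Finset.mem_range.mp hn).le
    _ ≤ K / 2 * ((addOrderOf (e i) : ℝ) ^ 2 / 4) := by gcongr
    _ = K / 8 * (addOrderOf (e i) : ℝ) ^ 2 := by ring

lemma add_sum_zsmul_sub_le_of_abs_discreteLaplacian_le [Finite G] [Fintype ι] {e : ι → G} {K : ℝ}
    {u : G → ℝ} (hu : ∀ p, |discreteLaplacian e u p| ≤ K) (s : Finset ι) (a : ι → ℤ) (p : G) :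
    u (p + ∑ i ∈ s, a i • e i) - u p ≤ K / 8 * ∑ i ∈ s, (addOrderOf (e i) : ℝ) ^ 2 := by
  classical
  induction s using Finset.induction_on with
  | empty => simp
  | insert i s hi ih =>
    have hstep :=
      add_zsmul_sub_le_of_abs_discreteLaplacian_le hu i (p + ∑ j ∈ s, a j • e j) (a i)
    rw [Finset.sum_insert hi, Finset.sum_insert hi, add_comm (a i • e i), ← add_assoc]
    linarith

lemma sub_le_of_abs_discreteLaplacian_le [Finite G] [Fintype ι] {e : ι → G}
    (he : AddSubgroup.closure (Set.range e) = ⊤) {K : ℝ} {u : G → ℝ}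
    (hu : ∀ p, |discreteLaplacian e u p| ≤ K) (p q : G) :
    u p - u q ≤ K / 8 * ∑ i, (addOrderOf (e i) : ℝ) ^ 2 := by
  obtain ⟨a, ha⟩ : ∃ a : ι → ℤ, p - q = ∑ i, a i • e i :=
    AddSubgroup.exists_of_mem_closure_range e _ (he ▸ AddSubgroup.mem_top _)
  simpa only [← ha, add_sub_cancel] using
    add_sum_zsmul_sub_le_of_abs_discreteLaplacian_le hu Finset.univ a q

lemma abs_le_of_sum_eq_zero_of_sub_le {α : Type*} [Fintype α] {f : α → ℝ} {B : ℝ}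
    (hsum : ∑ x, f x = 0) (hosc : ∀ x y, f x - f y ≤ B) (x : α) : |f x| ≤ B := by
  have hne : (Finset.univ : Finset α).Nonempty := ⟨x, Finset.mem_univ x⟩
  obtain ⟨y, -, hy⟩ : ∃ y ∈ Finset.univ, f y ≤ 0 :=
    Finset.exists_le_of_sum_le hne (by simp [hsum])
  obtain ⟨z, -, hz⟩ : ∃ z ∈ Finset.univ, 0 ≤ f z :=
    Finset.exists_le_of_sum_le hne (by simp [hsum])
  exact abs_le.mpr ⟨by linarith [hosc z x], by linarith [hosc x y]⟩

theorem abs_le_of_sum_eq_zero_of_abs_discreteLaplacian_le [Fintype G] [Fintype ι] {e : ι → G}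
    (he : AddSubgroup.closure (Set.range e) = ⊤) {K : ℝ} {u : G → ℝ} (hsum : ∑ p, u p = 0)
    (hu : ∀ p, |discreteLaplacian e u p| ≤ K) (p : G) :
    |u p| ≤ K / 8 * ∑ i, (addOrderOf (e i) : ℝ) ^ 2 :=
  abs_le_of_sum_eq_zero_of_sub_le hsum (sub_le_of_abs_discreteLaplacian_le he hu) p

end DiscreteLaplacian

/-- The unit vectors of the periodic grid, as index steps. -/
def gridStep (N : ℕ) : Fin 3 → GridIdx N :=
  ![(1, 0, 0), (0, 1, 0), (0, 0, 1)]

lemma addOrderOf_gridStep (N : ℕ) (i : Fin 3) : addOrderOf (gridStep N i) = N := by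
  fin_cases i <;> simp [gridStep, Prod.addOrderOf_mk, ZMod.addOrderOf_one]

lemma closure_range_gridStep (N : ℕ) : AddSubgroup.closure (Set.range (gridStep N)) = ⊤ := by
  refine (AddSubgroup.eq_top_iff' _).mpr fun ⟨x, y, z⟩ ↦ ?_
  obtain ⟨a, rfl⟩ := ZMod.intCast_surjective x
  obtain ⟨b, rfl⟩ := ZMod.intCast_surjective y
  obtain ⟨c, rfl⟩ := ZMod.intCast_surjective z
  exact AddSubgroup.mem_closure_range_iff_of_fintype.mpr
    ⟨![a, b, c], by ext <;> simp [gridStep, Fin.sum_univ_three]⟩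

lemma lap_eq_sq_mul_discreteLaplacian (N : ℕ) (f : GridIdx N → ℝ) (p : GridIdx N) :
    lap N f p = (N : ℝ) ^ 2 * discreteLaplacian (gridStep N) f p := by
  obtain ⟨x, y, z⟩ := p
  simp only [lap, dxm, dym, dzm, Dx, Dy, Dz, xsh, ysh, zsh, ← sub_eq_add_neg, sub_add_cancel,
    discreteLaplacian, secondDiff, gridStep, Fin.sum_univ_three, Matrix.cons_val, Prod.mk_add_mk,
    Prod.mk_sub_mk, add_zero, sub_zero]
  ring

section Linf

variable {N : ℕ} [NeZero N]

lemma abs_le_linf (f : GridIdx N → ℝ) (p : GridIdx N) : |f p| ≤ linf N f :=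
  le_ciSup (f := fun p ↦ |f p|) (Set.finite_range _).bddAbove p

lemma linf_le {f : GridIdx N → ℝ} {B : ℝ} (hf : ∀ p, |f p| ≤ B) : linf N f ≤ B :=
  ciSup_le hf

lemma abs_discreteLaplacian_gridStep_le (f : GridIdx N → ℝ) (p : GridIdx N) :
    |discreteLaplacian (gridStep N) f p| ≤ linf N (lap N f) / (N : ℝ) ^ 2 := by
  have hN : (0 : ℝ) < (N : ℝ) ^ 2 := by exact_mod_cast pow_pos (NeZero.pos N) 2
  rw [le_div_iff₀' hN, ← abs_of_pos hN, ← abs_mul, ← lap_eq_sq_mul_discreteLaplacian]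
  exact abs_le_linf (lap N f) p

theorem stmt2_general {f : GridIdx N → ℝ} (hf : zeroMean N f) :
    linf N f ≤ 3 / 8 * linf N (lap N f) := by
  refine linf_le fun p ↦ ?_
  calc |f p|
      ≤ linf N (lap N f) / (N : ℝ) ^ 2 / 8 * ∑ i, (addOrderOf (gridStep N i) : ℝ) ^ 2 :=
        abs_le_of_sum_eq_zero_of_abs_discreteLaplacian_le (closure_range_gridStep N) hf
          (abs_discreteLaplacian_gridStep_le f) p
    _ = 3 / 8 * linf N (lap N f) := by
        have hN : (N : ℝ) ≠ 0 := NeZero.ne _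
        simp only [addOrderOf_gridStep, Finset.sum_const, Finset.card_univ, Fintype.card_fin,
          nsmul_eq_mul, Nat.cast_ofNat]
        field_simp

end Linf

/-- Uniform bound `‖(-Δ_h)⁻¹(φ̂ - φ*)‖_∞ ≤ C₀ M` for positive data bounded by `M`. -/
theorem stmt2 :
    ∃ C0 : ℝ, 0 < C0 ∧
      ∀ (N : ℕ) [NeZero N], ∀ M : ℝ, 0 < M →
      ∀ φhat φstar ψ : GridIdx N → ℝ,
        (∀ p, 0 < φhat p ∧ φhat p ≤ M) →
        (∀ p, 0 < φstar p ∧ φstar p ≤ M) →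
        zeroMean N (fun p => φstar p - φhat p) →
        zeroMean N ψ →
        (∀ p, -lap N ψ p = φhat p - φstar p) →
        linf N ψ ≤ C0 * M := by
  refine ⟨3 / 8, by norm_num, fun N _ M _ φhat φstar ψ hhat hstar _ hψ hlap ↦
    (stmt2_general hψ).trans (mul_le_mul_of_nonneg_left (linf_le fun p ↦ ?_) (by norm_num))⟩
  rw [← abs_neg, hlap p]
  exact abs_sub_le_of_nonneg_of_le (hhat p).1.le (hhat p).2 (hstar p).1.le (hstar p).2
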